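/- arXiv:2605.19248 — 5 statements merged into one kernel-verified Lean document; each statement's English description precedes it below -/
import Mathlib

section
/- Let D, E, N be positive integers, let M ∈ Matrix (Fin D) (Fin E) ℂ be nonzero, and let U_1, …, U_N be unitary D×D complex matrices such that the matrices U_i M are pairwise orthogonal under the Hilbert–Schmidt (trace) inner product, i.e., Tr((U_i M)ᴴ (U_j M)) = 0 for all i ≠ j. Then N ≤ D². -/
open Matrix

/-! The `U i * M` are pairwise orthogonal, and nonzero because each `U i` is invertible, so they are
linearly independent. As `X ↦ X * M` is linear, any linear relation among the `U i` would carry over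
to the `U i * M`. Hence the `U i` are linearly independent in the space of `D × D` matrices, which
has dimension `D ^ 2`. -/

section HilbertSchmidt

variable {K m n : Type*} [Fintype m] [Fintype n]

/-- The Hilbert–Schmidt form `(A, B) ↦ Tr(Aᴴ B)`, conjugate-linear in its first argument. It makes
the library's results on orthogonal families of vectors available for the trace pairing. -/
def hilbertSchmidtForm [CommSemiring K] [StarRing K] :
    Matrix m n K →ₗ⋆[K] Matrix m n K →ₗ[K] K :=
  LinearMap.mk₂'ₛₗ (starRingEnd K) (RingHom.id K) (fun A B => trace (Aᴴ * B))
    (fun A A' B => by rw [conjTranspose_add, Matrix.add_mul, trace_add])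
    (fun c A B => by rw [conjTranspose_smul, Matrix.smul_mul, trace_smul, starRingEnd_apply])
    (fun A B B' => by rw [Matrix.mul_add, trace_add])
    (fun c A B => by rw [Matrix.mul_smul, trace_smul, RingHom.id_apply])

theorem linearIndependent_of_trace_conjTranspose_mul_eq_zero
    [Field K] [PartialOrder K] [StarRing K] [StarOrderedRing K]
    {ι : Type*} {A : ι → Matrix m n K} (hne : ∀ i, A i ≠ 0)
    (horth : ∀ i j, i ≠ j → trace ((A i)ᴴ * A j) = 0) : LinearIndependent K A :=
  LinearMap.linearIndependent_of_isOrthoᵢ (B := hilbertSchmidtForm)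
    (LinearMap.isOrthoᵢ_def.mpr horth)
    fun i => trace_conjTranspose_mul_self_eq_zero_iff.not.mpr (hne i)

end HilbertSchmidt

theorem matrix_mul_ne_zero_of_mul_eq_one {R l m n : Type*} [Semiring R]
    [Fintype l] [Fintype m] [DecidableEq m] {V : Matrix m l R} {U : Matrix l m R}
    {M : Matrix m n R} (hVU : V * U = 1) (hM : M ≠ 0) : U * M ≠ 0 := by
  intro hUM
  apply hM
  calc
    M = V * (U * M) := by rw [← Matrix.mul_assoc, hVU, Matrix.one_mul]
    _ = 0 := by rw [hUM, Matrix.mul_zero]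

theorem superdense_coding_bound_general {K ι l m n : Type*}
    [Field K] [PartialOrder K] [StarRing K] [StarOrderedRing K]
    [Fintype ι] [Fintype l] [Fintype m] [Fintype n]
    (M : Matrix m n K) (U : ι → Matrix l m K) (hne : ∀ i, U i * M ≠ 0)
    (horth : ∀ i j, i ≠ j → trace ((U i * M)ᴴ * (U j * M)) = 0) :
    Fintype.card ι ≤ Fintype.card l * Fintype.card m := by
  have hUM : LinearIndependent K fun i => U i * M :=
    linearIndependent_of_trace_conjTranspose_mul_eq_zero hne horth
  have hU : LinearIndependent K U := hUM.of_comp (mulRightLinearMap l K M)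
  simpa only [Module.finrank_matrix, Module.finrank_self, mul_one] using
    hU.fintype_card_le_finrank

/-- **Superdense coding bound.**  Let `D, E, N` be positive integers, `M` a nonzero
`D×E` complex matrix, and `U_1, …, U_N` unitary `D×D` complex matrices such that the
matrices `U_i M` are pairwise orthogonal in the Hilbert–Schmidt inner product, i.e.,
`Tr((U_i M)ᴴ (U_j M)) = 0` for `i ≠ j`.  Then `N ≤ D²`. -/
theorem superdense_coding_bound (D E N : ℕ) (hD : 0 < D) (hE : 0 < E) (hN : 0 < N)
    (M : Matrix (Fin D) (Fin E) ℂ) (hM : M ≠ 0)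
    (U : Fin N → Matrix (Fin D) (Fin D) ℂ)
    (hU : ∀ i, (U i)ᴴ * U i = 1)
    (horth : ∀ i j, i ≠ j → Matrix.trace ((U i * M)ᴴ * (U j * M)) = 0) :
    N ≤ D ^ 2 := by
  open scoped ComplexOrder in
  simpa only [Fintype.card_fin, ← sq] using
    superdense_coding_bound_general M U (fun i => matrix_mul_ne_zero_of_mul_eq_one (hU i) hM) horth
end

section
/- Let q be a prime, β ≥ 1, k ≥ 2, with q > βk. Let H_Z ∈ F_q^{β×βk} be the Vandermonde matrix with entries H_Z[r, j] = (j+1)^r for r = 0, …, β−1 and j = 0, …, βk−1 (evaluation points 1, 2, …, βk, which are distinct in F_q). For h = 0, …, k−1, let I_h = {hβ, hβ+1, …, (h+1)β−1}. Then for every h, the restriction map π_h : ker(H_Z) → F_q^β sending v to (v_j)_{j ∈ I_h} is surjective. -/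
open Matrix

/-- The `m`-th qudit position of helper `h`: index `h*β + m` in `Fin (β*k)`. -/
def blockIdx {β k : ℕ} (h : Fin k) (m : Fin β) : Fin (β * k) :=
  ⟨h.val * β + m.val, by
    have h1 : h.val + 1 ≤ k := h.isLt
    have h2 : m.val < β := m.isLt
    calc h.val * β + m.val < (h.val + 1) * β := by rw [Nat.succ_mul]; omega
      _ ≤ k * β := Nat.mul_le_mul_right β h1
      _ = β * k := Nat.mul_comm k β⟩

/-!
Any `n` columns of a Vandermonde matrix with `n` rows and distinct evaluation points form an
invertible square block. Hence a kernel vector may be prescribed freely on any set of coordinates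
whose complement has at least `n` elements: solve for the entries in `n` of the remaining
positions and set all others to zero. With `k ≥ 2`, the complement of a block of size `β` has at
least `β` elements.
-/

variable {ι κ μ R K : Type*}

theorem mulVec_extend_zero [Fintype ι] [Fintype κ] [NonUnitalNonAssocSemiring R]
    (A : Matrix μ ι R) {f : κ → ι} (hf : f.Injective) (s : κ → R) :
    A *ᵥ Function.extend f s 0 = A.submatrix id f *ᵥ s := by
  ext i
  refine (Fintype.sum_of_injective f hf _ _ (fun j hj => ?_) fun m => ?_).symm
  · simp [Function.extend_apply' _ _ _ hj]
  · simp [hf.extend_apply]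

theorem exists_mulVec_eq_zero_of_submatrix_surjective {ν : Type*} [Fintype ι] [Fintype ν]
    [NonUnitalNonAssocRing R] (A : Matrix μ ι R) {e : κ → ι} {f : ν → ι}
    (he : e.Injective) (hf : f.Injective) (hef : Disjoint (Set.range e) (Set.range f))
    (hA : Function.Surjective (A.submatrix id f).mulVec) (t : κ → R) :
    ∃ v : ι → R, A *ᵥ v = 0 ∧ ∀ m, v (e m) = t m := by
  obtain ⟨s, hs⟩ := hA (-(A *ᵥ Function.extend e t 0))
  refine ⟨Function.extend e t 0 + Function.extend f s 0, ?_, fun m => ?_⟩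
  · rw [mulVec_add, mulVec_extend_zero A hf, hs, add_neg_cancel]
  · have hm : e m ∉ Set.range f := Set.disjoint_left.mp hef ⟨m, rfl⟩
    simp [he.extend_apply, Function.extend_apply' _ _ _ hm]

theorem vandermonde_transpose_mulVec_surjective [Field K] {n : ℕ} {x : Fin n → K}
    (hx : x.Injective) : Function.Surjective (vandermonde x)ᵀ.mulVec := by
  rw [mulVec_surjective_iff_isUnit, isUnit_transpose, isUnit_iff_isUnit_det]
  exact (det_vandermonde_ne_zero_iff.mpr hx).isUnit

theorem exists_injective_disjoint_range [Fintype ι] [Fintype κ] [Fintype μ]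
    {e : κ → ι} (he : e.Injective)
    (hcard : Fintype.card μ + Fintype.card κ ≤ Fintype.card ι) :
    ∃ f : μ → ι, f.Injective ∧ Disjoint (Set.range e) (Set.range f) := by
  classical
  have hcompl : Fintype.card μ ≤ Fintype.card ↥(Set.range e)ᶜ := by
    rw [Fintype.card_compl_set, Set.card_range_of_injective he]
    exact Nat.le_sub_of_add_le hcard
  obtain ⟨g⟩ := Function.Embedding.nonempty_of_card_le hcompl
  refine ⟨(↑) ∘ g, Subtype.val_injective.comp g.injective, Set.disjoint_right.mpr ?_⟩
  rintro _ ⟨i, rfl⟩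
  exact (g i).2

theorem natCast_add_one_injective_of_lt [AddMonoidWithOne R] [IsRightCancelAdd R]
    (p : ℕ) [CharP R p] {N : ℕ} (hN : N < p) :
    Function.Injective fun j : Fin N => (((j : ℕ) + 1 : ℕ) : R) := by
  intro i j hij
  have hlt (a : Fin N) : (a : ℕ) + 1 ∈ Set.Iio p := lt_of_le_of_lt a.isLt hN
  exact Fin.ext (Nat.succ_injective (CharP.natCast_injOn_Iio R p (hlt i) (hlt j) hij))

theorem blockIdx_injective {β k : ℕ} (h : Fin k) :
    Function.Injective (blockIdx h : Fin β → Fin (β * k)) := fun _ _ hab =>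
  Fin.ext (Nat.add_left_cancel (congrArg Fin.val hab))

theorem kernel_block_restriction_surjective_general [Fintype ι] [Fintype κ] [Field K] {n : ℕ}
    {x : ι → K} (hx : x.Injective) {e : κ → ι} (he : e.Injective)
    (hcard : n + Fintype.card κ ≤ Fintype.card ι) (t : κ → K) :
    ∃ v : ι → K, (of fun (r : Fin n) j => x j ^ (r : ℕ)) *ᵥ v = 0 ∧
      ∀ m, v (e m) = t m := by
  obtain ⟨f, hf, hef⟩ : ∃ f : Fin n → ι, f.Injective ∧ Disjoint (Set.range e) (Set.range f) :=
    exists_injective_disjoint_range he (by rwa [Fintype.card_fin])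
  have hsurj : Function.Surjective
      ((of fun (r : Fin n) j => x j ^ (r : ℕ)).submatrix id f).mulVec :=
    vandermonde_transpose_mulVec_surjective (hx.comp hf)
  exact exists_mulVec_eq_zero_of_submatrix_surjective _ he hf hef hsurj t

/-- **Surjectivity of the block restriction of `ker H_Z` (Step 2 of Theorem 10).**
Let `q` be prime with `q > βk`, `β ≥ 1`, `k ≥ 2`, and let `H_Z ∈ 𝔽_q^{β×βk}` be the
Vandermonde matrix `H_Z[r,j] = (j+1)^r` (evaluation points `1, …, βk`).  For each helper
`h`, the restriction map `π_h : ker(H_Z) → 𝔽_q^β`, `v ↦ (v_j)_{j ∈ I_h}` with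
`I_h = {hβ, …, (h+1)β - 1}`, is surjective. -/
theorem kernel_block_restriction_surjective (q β k : ℕ) [Fact q.Prime]
    (hβ : 1 ≤ β) (hk : 2 ≤ k) (hq : β * k < q) :
    ∀ h : Fin k, ∀ t : Fin β → ZMod q,
      ∃ v : Fin (β * k) → ZMod q,
        (Matrix.of fun (r : Fin β) (j : Fin (β * k)) =>
            (((j : ℕ) + 1 : ℕ) : ZMod q) ^ (r : ℕ)).mulVec v = 0 ∧
        ∀ m : Fin β, v (blockIdx h m) = t m := by
  intro h
  exact kernel_block_restriction_surjective_general (natCast_add_one_injective_of_lt q hq)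
    (blockIdx_injective h) (by simpa [mul_two] using Nat.mul_le_mul_left β hk)
end

section
/- Let q be a prime, β ≥ 1, k ≥ 2, with q > βk. Let H_Z ∈ F_q^{β×βk} be the Vandermonde matrix with entries H_Z[r, j] = (j+1)^r for r = 0, …, β−1 and j = 0, …, βk−1. For h = 0, …, k−1, let I_h = {hβ, …, (h+1)β−1} and let π_h : ker(H_Z) → F_q^β be the restriction map v ↦ (v_j)_{j ∈ I_h}. Then the kernel of π_h has dimension β(k−2) over F_q, and consequently ker(H_Z) has dimension β(k−1). -/
open Matrix

/-!
The columns of `H_Z` in a block `I_h'` form a square Vandermonde matrix with distinct nodes, so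
vectors supported on that single block already reach every syndrome. Hence `H_Z` is onto and its
kernel has dimension `βk - β`. For `h' ≠ h`, entries prescribed on `I_h` can be completed on `I_h'`
to a vector of syndrome zero, so `π_h` is onto as well and its kernel has `β` dimensions fewer.
-/

open Function Module
open LinearMap (ker mem_ker funLeft funLeft_surjective_of_injective)

section Surjectivity

variable {R V W U : Type*} [Ring R] [AddCommGroup V] [Module R V] [AddCommGroup W] [Module R W]
  [AddCommGroup U] [Module R U]

theorem surjective_comp_ker_subtype_swap {f : V →ₗ[R] W} {g : V →ₗ[R] U} (hg : Surjective g)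
    (hf : Surjective (f ∘ₗ (ker g).subtype)) : Surjective (g ∘ₗ (ker f).subtype) := by
  intro u
  obtain ⟨v, rfl⟩ := hg u
  obtain ⟨⟨z, hz⟩, hfz : f z = f v⟩ := hf (f v)
  have hmem : v - z ∈ ker f := by rw [mem_ker, map_sub, hfz, sub_self]
  have hval : g (v - z) = g v := by rw [map_sub, mem_ker.mp hz, sub_zero]
  exact ⟨⟨v - z, hmem⟩, hval⟩

end Surjectivity

theorem finrank_ker_add_finrank_of_surjective {K V W : Type*} [DivisionRing K] [AddCommGroup V]
    [Module K V] [FiniteDimensional K V] [AddCommGroup W] [Module K W] {f : V →ₗ[K] W}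
    (hf : Surjective f) : finrank K (ker f) + finrank K W = finrank K V := by
  rw [← f.finrank_range_add_finrank_ker, LinearMap.range_eq_top.mpr hf, finrank_top, add_comm]

section ColumnSubmatrix

variable {m n ι κ R : Type*} [Fintype n] [Fintype ι]

theorem mulVec_extend_zero_s8 [NonUnitalNonAssocSemiring R] (A : Matrix m n R) {e : ι → n}
    (he : Injective e) (w : ι → R) : A *ᵥ extend e w 0 = A.submatrix id e *ᵥ w := by
  ext i
  refine (Finset.sum_of_injOn e he.injOn (by simp) (fun j _ hj => ?_) fun l _ => ?_).symm
  · rw [extend_apply' _ _ _ (by simpa using hj), Pi.zero_apply, mul_zero]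
  · simp only [he.extend_apply, submatrix_apply, id]

theorem mulVec_surjective_of_submatrix [NonUnitalNonAssocSemiring R] {A : Matrix m n R}
    {e : ι → n} (he : Injective e) (hA : Surjective (A.submatrix id e).mulVec) :
    Surjective A.mulVec := fun s =>
  let ⟨w, hw⟩ := hA s
  ⟨extend e w 0, (mulVec_extend_zero_s8 A he w).trans hw⟩

theorem funLeft_comp_ker_mulVecLin_subtype_surjective [CommRing R] {A : Matrix m n R}
    {e : ι → n} {d : κ → n} (he : Injective e) (hd : Injective d) (hde : ∀ i j, d j ≠ e i)
    (hA : Surjective (A.submatrix id e).mulVec) :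
    Surjective (funLeft R R d ∘ₗ (ker A.mulVecLin).subtype) := by
  refine surjective_comp_ker_subtype_swap (funLeft_surjective_of_injective R R d hd) fun s => ?_
  obtain ⟨w, hw⟩ := hA s
  have hmem : extend e w 0 ∈ ker (funLeft R R d) := by
    ext j
    exact extend_apply' _ _ _ fun ⟨i, hi⟩ => hde i j hi.symm
  exact ⟨⟨extend e w 0, hmem⟩, (mulVec_extend_zero_s8 A he w).trans hw⟩

end ColumnSubmatrix

theorem isUnit_vandermonde {K : Type*} [Field K] {n : ℕ} {v : Fin n → K} (hv : Injective v) :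
    IsUnit (vandermonde v) :=
  (isUnit_iff_isUnit_det _).mpr (det_vandermonde_ne_zero_iff.mpr hv).isUnit

theorem natCast_succ_injective {R : Type*} [AddMonoidWithOne R] [IsRightCancelAdd R] {n p : ℕ}
    [CharP R p] (hn : n ≤ p) : Injective fun j : Fin n => ((j + 1 : ℕ) : R) := by
  intro i j hij
  have hcast : ((i : ℕ) : R) = (j : ℕ) := by simpa using hij
  exact Fin.ext <|
    CharP.natCast_injOn_Iio R p (i.isLt.trans_le hn) (j.isLt.trans_le hn) hcast

theorem blockIdx_injective2 {β k : ℕ} : Injective2 (blockIdx : Fin k → Fin β → Fin (β * k)) := by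
  intro h h' m m' e
  have hval : (h * β + m : ℕ) = h' * β + m' := congrArg Fin.val e
  have hprod : finProdFinEquiv (h, m) = finProdFinEquiv (h', m') := by
    ext
    simpa only [finProdFinEquiv_apply_val, add_comm, mul_comm] using hval
  exact Prod.mk.inj (finProdFinEquiv.injective hprod)

theorem kernel_block_restriction_dims_general {K : Type*} [Field K] {β k : ℕ} (hk : 2 ≤ k)
    {A : Matrix (Fin β) (Fin (β * k)) K} (hA : ∀ h, IsUnit (A.submatrix id (blockIdx h))) :
    (∀ h : Fin k, finrank K (ker (funLeft K K (blockIdx h) ∘ₗ (ker A.mulVecLin).subtype))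
        = β * (k - 2)) ∧
      finrank K (ker A.mulVecLin) = β * (k - 1) := by
  have hblock (h : Fin k) : Surjective (A.submatrix id (blockIdx h)).mulVec :=
    mulVec_surjective_iff_isUnit.mpr (hA h)
  have hinj (h : Fin k) : Injective (blockIdx (β := β) h) := blockIdx_injective2.right h
  have hker : finrank K (ker A.mulVecLin) + β = β * k := by
    let h₀ : Fin k := ⟨0, by omega⟩
    simpa using finrank_ker_add_finrank_of_surjective (f := A.mulVecLin)
      (mulVec_surjective_of_submatrix (hinj h₀) (hblock h₀))
  rw [Nat.mul_sub, Nat.mul_sub]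
  refine ⟨fun h => ?_, by omega⟩
  have : Nontrivial (Fin k) := Fin.nontrivial_iff_two_le.mpr hk
  obtain ⟨h', hne⟩ := exists_ne h
  have hres := finrank_ker_add_finrank_of_surjective <|
    funLeft_comp_ker_mulVecLin_subtype_surjective (hinj h') (hinj h)
      (fun _ _ e => hne (blockIdx_injective2 e).1.symm) (hblock h')
  rw [finrank_fin_fun] at hres
  omega

/-- **Dimension count for the block restriction of `ker H_Z`.**
Let `q` be prime with `q > βk`, `β ≥ 1`, `k ≥ 2`, `H_Z[r,j] = (j+1)^r` the Vandermonde
matrix, and `π_h : ker(H_Z) → 𝔽_q^β` the restriction to the coordinates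
`I_h = {hβ, …, (h+1)β - 1}`.  Then `dim ker(π_h) = β(k-2)` for every `h`, and
`dim ker(H_Z) = β(k-1)`. -/
theorem kernel_block_restriction_dims (q β k : ℕ) [Fact q.Prime]
    (hβ : 1 ≤ β) (hk : 2 ≤ k) (hq : β * k < q) :
    (∀ h : Fin k,
      Module.finrank (ZMod q)
        ↥(LinearMap.ker ((LinearMap.funLeft (ZMod q) (ZMod q) (blockIdx h)).comp
          (LinearMap.ker (Matrix.mulVecLin
            (Matrix.of fun (r : Fin β) (j : Fin (β * k)) =>
              (((j : ℕ) + 1 : ℕ) : ZMod q) ^ (r : ℕ)))).subtype))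
        = β * (k - 2)) ∧
    Module.finrank (ZMod q)
      ↥(LinearMap.ker (Matrix.mulVecLin
        (Matrix.of fun (r : Fin β) (j : Fin (β * k)) =>
          (((j : ℕ) + 1 : ℕ) : ZMod q) ^ (r : ℕ))))
      = β * (k - 1) :=
  kernel_block_restriction_dims_general hk fun h =>
    (isUnit_transpose _).mpr <| isUnit_vandermonde <|
      (natCast_succ_injective hq.le).comp (blockIdx_injective2.right h)
end

section
/- Let q be a prime, β ≥ 1, k ≥ 2, with q > βk, and let 1 ≤ r_z ≤ β. Let H_Z ∈ F_q^{β×βk} be the Vandermonde matrix with entries H_Z[r, j] = (j+1)^r, and for h = 0, …, k−1 let I_h = {hβ, …, (h+1)β−1}. Let N = β(k−1) (the dimension of ker(H_Z)). Among the q^{r_z N} matrices H_X ∈ F_q^{r_z×βk} all of whose rows lie in ker(H_Z), the number of matrices for which some block submatrix H_X restricted to columns I_h fails to have rank r_z is at most k · r_z · q^{r_z N − 1}. -/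
open Matrix

/-!
The kernel of `H` projects onto `K^β` through the columns of each block: prescribe the entries on
that block and use another block, on which `H` is invertible, to correct the syndrome. A block of
`H_X` has deficient rank iff one of its rows is a combination of the others. Fixing the row and the
`r - 1` coefficients imposes one relation with values in `K^β`, which by surjectivity holds for
exactly `q^(rN - β)` of the `q^(rN)` matrices. The union bound over `k` blocks, `r` rows and
`q^(r-1)` coefficient vectors gives `k r q^(rN - β + r - 1)`, and `r ≤ β` finishes.
-/

section DivisionRing

variable {K V W ι : Type*} [DivisionRing K] [AddCommGroup V] [Module K V]
  [AddCommGroup W] [Module K W]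

theorem finrank_ker_of_surjective [Module.Finite K V] {f : V →ₗ[K] W}
    (hf : Function.Surjective f) :
    Module.finrank K (LinearMap.ker f) = Module.finrank K V - Module.finrank K W := by
  rw [← f.finrank_range_add_finrank_ker, LinearMap.range_eq_top.2 hf, finrank_top,
    Nat.add_sub_cancel_left]

theorem not_linearIndependent_iff_exists_eq_sum_ne [Fintype ι] [DecidableEq ι] {v : ι → V} :
    ¬LinearIndependent K v ↔
      ∃ (i : ι) (c : {j // j ≠ i} → K), v i = ∑ j, c j • v j := by
  have image_eq_range (i : ι) : v '' (Set.univ \ {i}) = Set.range fun j : {j // j ≠ i} ↦ v j := by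
    ext; simp
  simp_rw [linearIndependent_iff_notMem_span, image_eq_range,
    Submodule.mem_span_range_iff_exists_fun, not_forall, not_not, eq_comm]

end DivisionRing

section DependentTuples

variable {K V W ι κ : Type*} [Field K] [AddCommGroup V] [Module K V] [Module.Finite K V]
  [AddCommGroup W] [Module K W] [Fintype ι]

theorem ncard_map_eq_sum_ne [DecidableEq ι] {π : V →ₗ[K] W} (hπ : Function.Surjective π)
    (i : ι) (c : {j // j ≠ i} → K) :
    {v : ι → V | π (v i) = ∑ j, c j • π (v j)}.ncard =
      Nat.card K ^ (Fintype.card ι * Module.finrank K V - Module.finrank K W) := by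
  let relation : (ι → V) →ₗ[K] W :=
    π ∘ₗ (LinearMap.proj i - ∑ j : {j // j ≠ i}, c j • LinearMap.proj (j : ι))
  have relation_apply (v : ι → V) : relation v = π (v i) - ∑ j, c j • π (v j) := by
    simp [relation]
  have surjective_relation : Function.Surjective relation := fun w ↦ by
    obtain ⟨x, rfl⟩ := hπ w
    refine ⟨Pi.single i x, ?_⟩
    have single_apply_ne (j : {j // j ≠ i}) : (Pi.single i x : ι → V) j = 0 :=
      Pi.single_eq_of_ne j.2 _
    simp [relation_apply, single_apply_ne]
  have setOf_eq_ker : {v : ι → V | π (v i) = ∑ j, c j • π (v j)} = LinearMap.ker relation := by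
    ext v
    simp [relation_apply, sub_eq_zero]
  rw [setOf_eq_ker, ← Nat.card_coe_set_eq, SetLike.coe_sort_coe,
    Module.natCard_eq_pow_finrank (K := K), finrank_ker_of_surjective surjective_relation,
    Module.finrank_pi_fintype, Finset.sum_const, Finset.card_univ, smul_eq_mul]

variable [Finite K]

theorem ncard_not_linearIndependent_comp_le {π : V →ₗ[K] W} (hπ : Function.Surjective π) :
    {v : ι → V | ¬LinearIndependent K (π ∘ v)}.ncard ≤ Fintype.card ι * Nat.card K ^
      (Fintype.card ι * Module.finrank K V - Module.finrank K W + (Fintype.card ι - 1)) := by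
  classical
  have := Fintype.ofFinite K
  have setOf_eq_iUnion : {v : ι → V | ¬LinearIndependent K (π ∘ v)} =
      ⋃ (i : ι) (c : {j // j ≠ i} → K), {v : ι → V | π (v i) = ∑ j, c j • π (v j)} := by
    ext v
    simp [not_linearIndependent_iff_exists_eq_sum_ne]
  calc {v : ι → V | ¬LinearIndependent K (π ∘ v)}.ncard
      ≤ ∑ i : ι, ∑ c : {j // j ≠ i} → K, {v : ι → V | π (v i) = ∑ j, c j • π (v j)}.ncard := by
        rw [setOf_eq_iUnion]
        exact (Set.ncard_iUnion_le_of_fintype _).trans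
          (Finset.sum_le_sum fun i _ ↦ Set.ncard_iUnion_le_of_fintype _)
    _ = Fintype.card ι * (Nat.card K ^ (Fintype.card ι - 1) *
          Nat.card K ^ (Fintype.card ι * Module.finrank K V - Module.finrank K W)) := by
        simp [ncard_map_eq_sum_ne hπ, Fintype.card_subtype_compl]
    _ = _ := by rw [← pow_add, add_comm]

theorem ncard_exists_not_linearIndependent_comp_le [Fintype κ] {π : κ → V →ₗ[K] W}
    (hπ : ∀ h, Function.Surjective (π h)) :
    {v : ι → V | ∃ h, ¬LinearIndependent K (π h ∘ v)}.ncard ≤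
      Fintype.card κ * Fintype.card ι * Nat.card K ^
        (Fintype.card ι * Module.finrank K V - Module.finrank K W + (Fintype.card ι - 1)) := by
  rw [Set.ofPred_exists, mul_assoc]
  refine (Set.ncard_iUnion_le_of_fintype _).trans ?_
  simpa using Finset.sum_le_card_nsmul Finset.univ _ _ fun h _ ↦
    ncard_not_linearIndependent_comp_le (hπ h)

end DependentTuples

section Matrices

variable {R l m n : Type*} [Fintype m] [Fintype n]

theorem mulVec_extend_zero_s10 [NonUnitalNonAssocSemiring R] {e : m → n} (he : Function.Injective e)
    (H : Matrix l n R) (u : m → R) :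
    H *ᵥ Function.extend e u 0 = H.submatrix id e *ᵥ u := by
  ext i
  refine (Fintype.sum_of_injective e he _ _ (fun j hj ↦ ?_) fun j ↦ ?_).symm
  · rw [Function.extend_apply' _ _ _ hj, Pi.zero_apply, mul_zero]
  · simp [he.extend_apply]

theorem exists_mulVec_eq_and_comp_eq [CommRing R] [DecidableEq m] (H : Matrix m n R)
    {e : l → n} {e' : m → n} (he : Function.Injective e) (he' : Function.Injective e')
    (hdisj : ∀ i j, e i ≠ e' j) (hH : IsUnit (H.submatrix id e')) (b : m → R) (w : l → R) :
    ∃ v, H *ᵥ v = b ∧ v ∘ e = w := by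
  obtain ⟨u, hu⟩ := mulVec_surjective_iff_isUnit.2 hH (b - H *ᵥ Function.extend e w 0)
  refine ⟨Function.extend e w 0 + Function.extend e' u 0, ?_, funext fun i ↦ ?_⟩
  · rw [mulVec_add, mulVec_extend_zero_s10 he', hu, add_sub_cancel]
  · have notMem_range : ¬∃ j, e' j = e i := fun ⟨j, hj⟩ ↦ hdisj i j hj.symm
    simp [he.extend_apply, Function.extend_apply' _ _ _ notMem_range]

end Matrices

/-- The restriction to the coordinates selected by `e` of the code with parity-check matrix `H`. The
codomain is the full space `l → R` rather than the restricted code, so that surjectivity says that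
every pattern on these coordinates extends to a codeword. -/
def kerRestrict {R l m n : Type*} [CommSemiring R] [Fintype n] (H : Matrix m n R) (e : l → n) :
    LinearMap.ker H.mulVecLin →ₗ[R] l → R :=
  (LinearMap.funLeft R R e).domRestrict (LinearMap.ker H.mulVecLin)

section InvertibleBlocks

variable {R κ m n : Type*} [CommRing R] [Nontrivial κ] [Fintype m] [DecidableEq m] [Fintype n]
  {H : Matrix m n R} {block : κ → m → n}

theorem exists_mulVec_eq_and_comp_block_eq (hblock : Function.Injective2 block)
    (hH : ∀ h, IsUnit (H.submatrix id (block h))) (h : κ) (b w : m → R) :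
    ∃ v, H *ᵥ v = b ∧ v ∘ block h = w := by
  obtain ⟨h', hh'⟩ := exists_ne h
  exact exists_mulVec_eq_and_comp_eq H (hblock.right h) (hblock.right h')
    (fun i j hij ↦ hh' (hblock hij).1.symm) (hH h') b w

theorem kerRestrict_block_surjective (hblock : Function.Injective2 block)
    (hH : ∀ h, IsUnit (H.submatrix id (block h))) (h : κ) :
    Function.Surjective (kerRestrict H (block h)) := fun w ↦ by
  obtain ⟨v, hv, hvw⟩ := exists_mulVec_eq_and_comp_block_eq hblock hH h 0 w
  exact ⟨⟨v, hv⟩, hvw⟩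

end InvertibleBlocks

section DeficientBlocks

variable {K ι κ l m n : Type*} [Field K] [Fintype n] {H : Matrix m n K}

theorem exists_not_linearIndependent_kerRestrict [Fintype ι] [Fintype l] {block : κ → l → n}
    {X : Matrix ι n K} (hX : ∀ i, H *ᵥ X i = 0)
    (hrank : ∃ h, (X.submatrix id (block h)).rank ≠ Fintype.card ι) :
    ∃ v : ι → LinearMap.ker H.mulVecLin,
      (∃ h, ¬LinearIndependent K (kerRestrict H (block h) ∘ v)) ∧ (fun i ↦ (v i : n → K)) = X :=
  ⟨fun i ↦ ⟨X i, hX i⟩, hrank.imp fun _ hne hli ↦ hne (LinearIndependent.rank_matrix hli), rfl⟩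

variable [Fintype m] [DecidableEq m] [Nontrivial κ] {block : κ → m → n}

theorem finrank_ker_mulVecLin_of_isUnit_block (hblock : Function.Injective2 block)
    (hH : ∀ h, IsUnit (H.submatrix id (block h))) :
    Module.finrank K (LinearMap.ker H.mulVecLin) = Fintype.card n - Fintype.card m := by
  obtain ⟨h⟩ : Nonempty κ := inferInstance
  have surjective_mulVec : Function.Surjective H.mulVecLin := fun b ↦
    (exists_mulVec_eq_and_comp_block_eq hblock hH h b 0).imp fun _ ↦ And.left
  simp [finrank_ker_of_surjective surjective_mulVec]

theorem bad_locus_count_general [Finite K] [Fintype ι] [Fintype κ]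
    (hblock : Function.Injective2 block) (hH : ∀ h, IsUnit (H.submatrix id (block h))) :
    Nat.card {X : Matrix ι n K //
        (∀ i, H *ᵥ X i = 0) ∧ ∃ h, (X.submatrix id (block h)).rank ≠ Fintype.card ι} ≤
      Fintype.card κ * Fintype.card ι * Nat.card K ^
        (Fintype.card ι * (Fintype.card n - Fintype.card m) - Fintype.card m +
          (Fintype.card ι - 1)) := by
  have bad_subset : {X : Matrix ι n K |
        (∀ i, H *ᵥ X i = 0) ∧ ∃ h, (X.submatrix id (block h)).rank ≠ Fintype.card ι} ⊆
      (fun v i ↦ (v i : n → K)) ''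
        {v : ι → LinearMap.ker H.mulVecLin |
          ∃ h, ¬LinearIndependent K (kerRestrict H (block h) ∘ v)} :=
    fun X hX ↦ exists_not_linearIndependent_kerRestrict hX.1 hX.2
  have bound := ncard_exists_not_linearIndependent_comp_le (ι := ι)
    (kerRestrict_block_surjective hblock hH)
  rw [finrank_ker_mulVecLin_of_isUnit_block hblock hH, Module.finrank_fintype_fun_eq_card] at bound
  exact (Set.ncard_le_ncard bad_subset).trans ((Set.ncard_image_le).trans bound)

end DeficientBlocks

theorem blockIdx_injective2_s10 {β k : ℕ} : Function.Injective2 (blockIdx (β := β) (k := k)) := by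
  intro h h' m m' heq
  have hval : h.val * β + m.val = h'.val * β + m'.val := congrArg Fin.val heq
  have prod_eq : finProdFinEquiv (h, m) = finProdFinEquiv (h', m') := by
    ext
    simpa only [finProdFinEquiv_apply_val, add_comm, mul_comm] using hval
  exact Prod.ext_iff.1 (finProdFinEquiv.injective prod_eq)

theorem isUnit_vandermonde_submatrix {K n : Type*} [Field K] {β : ℕ} {x : n → K}
    (hx : Function.Injective x) {e : Fin β → n} (he : Function.Injective e) :
    IsUnit ((of fun (r : Fin β) (j : n) ↦ x j ^ (r : ℕ)).submatrix id e) := by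
  have eq_transpose : (of fun (r : Fin β) (j : n) ↦ x j ^ (r : ℕ)).submatrix id e =
      (vandermonde (x ∘ e))ᵀ := rfl
  rw [eq_transpose, isUnit_iff_isUnit_det, det_transpose, isUnit_iff_ne_zero]
  exact det_vandermonde_ne_zero_iff.2 (hx.comp he)

theorem natCast_val_add_one_injective {q n : ℕ} (hn : n ≤ q) :
    Function.Injective fun j : Fin n ↦ (((j : ℕ) + 1 : ℕ) : ZMod q) := by
  intro i j hij
  simp only [Nat.cast_add, Nat.cast_one, add_left_inj] at hij
  exact Fin.ext (CharP.natCast_injOn_Iio (ZMod q) q (i.2.trans_le hn) (j.2.trans_le hn) hij)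

/-- **Schwartz–Zippel union bound on the bad locus.**
Let `q` be prime with `q > βk`, `β ≥ 1`, `k ≥ 2`, `1 ≤ r_z ≤ β`, and let
`H_Z[r,j] = (j+1)^r` be the Vandermonde matrix, with `N = β(k-1) = dim ker(H_Z)`.
Among the matrices `H_X ∈ 𝔽_q^{r_z×βk}` all of whose rows lie in `ker(H_Z)`, the number
of matrices for which some helper-subblock (columns `I_h = {hβ, …, (h+1)β - 1}`) fails to
have rank `r_z` is at most `k · r_z · q^{r_z N - 1}`. -/
theorem bad_locus_count (q β k r_z : ℕ) [Fact q.Prime]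
    (hβ : 1 ≤ β) (hk : 2 ≤ k) (hq : β * k < q) (hrz1 : 1 ≤ r_z) (hrzβ : r_z ≤ β) :
    Nat.card {HX : Matrix (Fin r_z) (Fin (β * k)) (ZMod q) //
        (∀ i : Fin r_z,
          (Matrix.of fun (r : Fin β) (j : Fin (β * k)) =>
            (((j : ℕ) + 1 : ℕ) : ZMod q) ^ (r : ℕ)).mulVec (HX i) = 0) ∧
        ∃ h : Fin k, (HX.submatrix id (blockIdx h)).rank ≠ r_z}
      ≤ k * r_z * q ^ (r_z * (β * (k - 1)) - 1) := by
  have : Nontrivial (Fin k) := Fin.nontrivial_iff_two_le.2 hk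
  have hβN : β ≤ r_z * (β * (k - 1)) :=
    (Nat.le_mul_of_pos_right β (by lia)).trans (Nat.le_mul_of_pos_left _ hrz1)
  have bound := bad_locus_count_general (ι := Fin r_z) blockIdx_injective2_s10 fun h ↦
    isUnit_vandermonde_submatrix (natCast_val_add_one_injective hq.le)
      (blockIdx_injective2_s10.right h)
  simp only [Fintype.card_fin, Nat.card_zmod, ← Nat.mul_sub_one] at bound
  refine bound.trans (Nat.mul_le_mul_left _ (Nat.pow_le_pow_right (Nat.Prime.pos Fact.out) ?_))
  lia
end

section
/- Let q be a prime, α ≥ 1, k ≥ 2. Let Γ_{h_1}, …, Γ_{h_k}, Γ_s ∈ F_q^{α×αk} be such that the vertical stack [Γ_{h_1}; …; Γ_{h_k}] is invertible and, for every i ∈ {1, …, k}, the vertical stack obtained by replacing Γ_{h_i} with Γ_s (i.e., [Γ_s; (Γ_{h_j})_{j ≠ i}]) is invertible. Let S_1, …, S_k be finite sets, let f_i : F_q^α → S_i be encoding functions, and let g : S_1 × ⋯ × S_k → F_q^α be a decoder satisfying g(f_1(Γ_{h_1} m'), …, f_k(Γ_{h_k} m')) = Γ_s m' for every m' ∈ F_q^{αk}.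 Then |S_i| ≥ q^α for every i ∈ {1, …, k}. -/
open Matrix

/-! Messages `m` with `Γ_{h_j} m = 0` for all `j ≠ i` and `Γ_s m = x` exist for every `x`, because
the stack with `Γ_s` in place of `Γ_{h_i}` is invertible. On such messages the outputs of all
encoders other than `f_i` do not depend on `x`, so the decoder recovers `x` from the output of
`f_i` alone, which must therefore take at least as many values as there are vectors `x`. -/

/-- The vertical stack `[Γ₁; …; Γₖ]` of a family of blocks of equal size; its rows are indexed by
pairs, row `(j, a)` being row `a` of the block `Γ j`. -/
def verticalStack {ι β n R : Type*} (Γ : ι → Matrix β n R) : Matrix (ι × β) n R :=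
  Matrix.of fun p c => Γ p.1 p.2 c

theorem exists_forall_mulVec_eq_of_verticalStack_mul_eq_one {ι β n R : Type*}
    [Finite ι] [DecidableEq ι] [Finite β] [DecidableEq β] [Fintype n] [Semiring R]
    {Γ : ι → Matrix β n R} {B : Matrix n (ι × β) R} (hB : verticalStack Γ * B = 1)
    (w : ι → β → R) : ∃ m : n → R, ∀ j, Γ j *ᵥ m = w j := by
  obtain ⟨m, hm⟩ : ∃ m, verticalStack Γ *ᵥ m = Function.uncurry w :=
    mulVec_surjective_iff_exists_right_inverse.mpr ⟨B, hB⟩ _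
  exact ⟨m, fun j => funext fun a => congrFun hm (j, a)⟩

theorem injective_encoding_of_decodable {ι X M Z : Type*} {Y S : ι → Type*}
    {c : ∀ j, M → Y j} {f : ∀ j, Y j → S j} {g : (∀ j, S j) → Z} {s : M → Z}
    (hg : ∀ m, g (fun j => f j (c j m)) = s m) {i : ι} {m : X → M}
    (hc : ∀ j ≠ i, ∀ x y, c j (m x) = c j (m y)) (hs : Function.Injective (s ∘ m)) :
    Function.Injective fun x => f i (c i (m x)) := by
  intro x y hxy
  have same_symbols : (fun j => f j (c j (m x))) = fun j => f j (c j (m y)) := by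
    funext j
    obtain rfl | hj := eq_or_ne j i
    · exact hxy
    · rw [hc j hj x y]
  apply hs
  simpa only [Function.comp_apply, hg] using congrArg g same_symbols

theorem classical_lower_bound_general {ι β n R : Type*}
    [Finite ι] [DecidableEq ι] [Fintype β] [DecidableEq β] [Fintype n] [Semiring R] [Fintype R]
    {Γ : ι → Matrix β n R} {Γs : Matrix β n R} {i : ι} {B : Matrix n (ι × β) R}
    (hB : verticalStack (Function.update Γ i Γs) * B = 1)
    {S : ι → Type*} [Fintype (S i)] {f : ∀ j, (β → R) → S j} {g : (∀ j, S j) → β → R}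
    (hg : ∀ m : n → R, g (fun j => f j (Γ j *ᵥ m)) = Γs *ᵥ m) :
    Fintype.card R ^ Fintype.card β ≤ Fintype.card (S i) := by
  choose m hm using fun x : β → R =>
    exists_forall_mulVec_eq_of_verticalStack_mul_eq_one hB (Pi.single i x)
  have mulVec_target (x : β → R) : Γs *ᵥ m x = x := by
    simpa using hm x i
  have mulVec_other (j : ι) (hj : j ≠ i) (x : β → R) : Γ j *ᵥ m x = 0 := by
    simpa [hj] using hm x j
  have injective_symbol : Function.Injective fun x => f i (Γ i *ᵥ m x) :=
    injective_encoding_of_decodable (c := fun j v => Γ j *ᵥ v) hg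
      (fun j hj x y => (mulVec_other j hj x).trans (mulVec_other j hj y).symm)
      (Function.LeftInverse.injective (g := id) mulVec_target)
  simpa using Fintype.card_le_of_injective _ injective_symbol

/-- **Classical lower bound (Nakkiran–Shah–Rashmi style, general `α`).**
Let `q` be prime, `α ≥ 1`, `k ≥ 2`.  Let `Γ_{h_1}, …, Γ_{h_k}, Γ_s ∈ 𝔽_q^{α×αk}` be such
that the vertical stack `[Γ_{h_1}; …; Γ_{h_k}]` is invertible and, for every `i`, the
stack obtained by replacing `Γ_{h_i}` with `Γ_s` is invertible (all witnessed by
two-sided inverses).  If encoders `f_i : 𝔽_q^α → S_i` into finite sets and a decoder `g`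
satisfy `g(f_1(Γ_{h_1} m'), …, f_k(Γ_{h_k} m')) = Γ_s m'` for every `m'`, then
`|S_i| ≥ q^α` for every `i`. -/
theorem classical_lower_bound (q α k : ℕ) [Fact q.Prime] (hα : 1 ≤ α) (hk : 2 ≤ k)
    (Γ : Fin k → Matrix (Fin α) (Fin (α * k)) (ZMod q))
    (Γs : Matrix (Fin α) (Fin (α * k)) (ZMod q))
    (hG : ∃ Ginv : Matrix (Fin (α * k)) (Fin k × Fin α) (ZMod q),
        (Matrix.of fun (p : Fin k × Fin α) (c : Fin (α * k)) => Γ p.1 p.2 c) * Ginv = 1 ∧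
        Ginv * (Matrix.of fun (p : Fin k × Fin α) (c : Fin (α * k)) => Γ p.1 p.2 c) = 1)
    (hGs : ∀ i : Fin k, ∃ Ginv : Matrix (Fin (α * k)) (Fin k × Fin α) (ZMod q),
        (Matrix.of fun (p : Fin k × Fin α) (c : Fin (α * k)) =>
          Function.update Γ i Γs p.1 p.2 c) * Ginv = 1 ∧
        Ginv * (Matrix.of fun (p : Fin k × Fin α) (c : Fin (α * k)) =>
          Function.update Γ i Γs p.1 p.2 c) = 1)
    (S : Fin k → Type*) [∀ i, Fintype (S i)]
    (f : ∀ i : Fin k, (Fin α → ZMod q) → S i)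
    (g : (∀ i : Fin k, S i) → (Fin α → ZMod q))
    (hg : ∀ m' : Fin (α * k) → ZMod q,
        g (fun i => f i ((Γ i).mulVec m')) = Γs.mulVec m') :
    ∀ i : Fin k, q ^ α ≤ Fintype.card (S i) := by
  intro i
  obtain ⟨B, hB, -⟩ := hGs i
  simpa using classical_lower_bound_general hB hg
end
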